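/- Let Φ_i be the i-th Dirichlet eigenfunction of A = −div(w∇·) with eigenvalue λ_i, and let Ω_j be a nodal domain of Φ_i (a connected component of {Φ_i ≠ 0}). Then the restriction of Φ_i to Ω_j, extended by zero, lies in H₀¹(Ω_j; w), and λ_i(Ω) = λ₁(Ω_j), the first Dirichlet eigenvalue of A on Ω_j. -/

import Mathlib

open MeasureTheory
open scoped RealInnerProductSpace

/-- Membership in the Dirichlet space `H₀¹(Ω;w)`-type class. -/
def H01Mem {N : ℕ} (Ω : Set (EuclideanSpace ℝ (Fin N)))
    (w u : EuclideanSpace ℝ (Fin N) → ℝ) : Prop :=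
  ContinuousOn u (closure Ω) ∧ (∀ x ∈ frontier Ω, u x = 0) ∧
  DifferentiableOn ℝ u Ω ∧
  MeasureTheory.IntegrableOn (fun x => u x ^ 2) Ω ∧
  MeasureTheory.IntegrableOn (fun x => ‖gradient u x‖ ^ 2 * w x) Ω

/-- Weak Dirichlet eigenfunction of `-div(w∇·)` on `Ω` with eigenvalue `l`. -/
def IsWeakEigenfun {N : ℕ} (Ω : Set (EuclideanSpace ℝ (Fin N)))
    (w u : EuclideanSpace ℝ (Fin N) → ℝ) (l : ℝ) : Prop :=
  H01Mem Ω w u ∧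
  ∀ ψ : EuclideanSpace ℝ (Fin N) → ℝ,
    ContDiff ℝ (⊤ : ℕ∞) ψ → HasCompactSupport ψ → tsupport ψ ⊆ Ω →
    ∫ x in Ω, ⟪gradient u x, gradient ψ x⟫ * w x = l * ∫ x in Ω, u x * ψ x

/-- The `n`-th Dirichlet eigenvalue (1-indexed) of `-div(w∇·)` on `Ω` via the
Courant–Fischer min-max principle over test-function subspaces. -/
noncomputable def dirEigen {N : ℕ} (Ω : Set (EuclideanSpace ℝ (Fin N)))
    (w : EuclideanSpace ℝ (Fin N) → ℝ) (n : ℕ) : ℝ :=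
  sInf { r : ℝ | ∃ g : Fin n → EuclideanSpace ℝ (Fin N) → ℝ,
    (∀ j, ContDiff ℝ (⊤ : ℕ∞) (g j) ∧ HasCompactSupport (g j) ∧ tsupport (g j) ⊆ Ω) ∧
    ∀ c : Fin n → ℝ, c ≠ 0 →
      0 < ∫ x in Ω, (∑ j, c j * g j x) ^ 2 ∧
      ∫ x in Ω, ‖gradient (fun y => ∑ j, c j * g j y) x‖ ^ 2 * w x ≤
        r * ∫ x in Ω, (∑ j, c j * g j x) ^ 2 }

/-!
Let `D` be a nodal domain of the eigenfunction `Φ`, with eigenvalue `l`. Since `Φ` vanishes on the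
frontier of `D`, truncating it near height zero gives functions with compact support in `D`, and
mollifying these gives test functions that converge to `Φ` in the energy norm: `Φ ∈ H₀¹(D; w)`.
Testing the equation on `D` with `Φ` itself shows that the Rayleigh quotient of `Φ` is `l`, so
`λ₁(D) ≤ l`. For `l ≤ λ₁(D)`, test the equation with `g² / Φ` for `g ∈ C_c^∞(D)`: Picone's
inequality `⟪∇Φ, ∇(g² / Φ)⟫ ≤ ‖∇g‖²` gives `l * ∫ g² ≤ ∫ ‖∇g‖² w`.
-/

open Filter Topology Set
open ContinuousLinearMap (lsmul)
open scoped ENNReal NNReal Convolution Gradient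

section Lp

variable {α β F : Type*} [MeasurableSpace α] [MeasurableSpace β] [NormedAddCommGroup F]
  {μ : Measure α} {p : ℝ≥0∞}

theorem enorm_integral_le_eLpNorm [NormedSpace ℝ F] [IsProbabilityMeasure μ] (hp : 1 ≤ p)
    {f : α → F} (hf : AEStronglyMeasurable f μ) : ‖∫ x, f x ∂μ‖ₑ ≤ eLpNorm f p μ := calc
  ‖∫ x, f x ∂μ‖ₑ ≤ ∫⁻ x, ‖f x‖ₑ ∂μ := enorm_integral_le_lintegral_enorm f
  _ = eLpNorm f 1 μ := eLpNorm_one_eq_lintegral_enorm.symm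
  _ ≤ eLpNorm f p μ := eLpNorm_le_eLpNorm_of_exponent_le hp hf

theorem eLpNorm_integral_le_of_ae_le [NormedSpace ℝ F] [SFinite μ] {ν : Measure β}
    [IsProbabilityMeasure ν] (hp : 1 ≤ p) (hp' : p ≠ ⊤) {H : α → β → F}
    (hH : AEStronglyMeasurable (Function.uncurry H) (μ.prod ν)) {c : ℝ≥0∞}
    (hc : ∀ᵐ t ∂ν, eLpNorm (fun x => H x t) p μ ≤ c) :
    eLpNorm (fun x => ∫ t, H x t ∂ν) p μ ≤ c := by
  lift p to ℝ≥0 using hp'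
  have hp0 : p ≠ 0 := by rintro rfl; simp at hp
  have hpos : (0 : ℝ) < p := by positivity
  refine (ENNReal.rpow_le_rpow_iff hpos).1 ?_
  calc eLpNorm (fun x => ∫ t, H x t ∂ν) p μ ^ (p : ℝ)
      = ∫⁻ x, ‖∫ t, H x t ∂ν‖ₑ ^ (p : ℝ) ∂μ := eLpNorm_nnreal_pow_eq_lintegral hp0
    _ ≤ ∫⁻ x, ∫⁻ t, ‖H x t‖ₑ ^ (p : ℝ) ∂ν ∂μ := by
        refine lintegral_mono_ae ?_
        filter_upwards [hH.prodMk_left] with x hx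
        rw [← eLpNorm_nnreal_pow_eq_lintegral hp0]
        gcongr
        exact enorm_integral_le_eLpNorm hp hx
    _ = ∫⁻ t, ∫⁻ x, ‖H x t‖ₑ ^ (p : ℝ) ∂μ ∂ν :=
        lintegral_lintegral_swap (hH.enorm.pow_const _)
    _ ≤ ∫⁻ _, c ^ (p : ℝ) ∂ν := by
        refine lintegral_mono_ae ?_
        filter_upwards [hc] with t ht
        rw [← eLpNorm_nnreal_pow_eq_lintegral hp0]
        gcongr
    _ = c ^ (p : ℝ) := by simp

theorem tendsto_eLpNorm_zero_of_dominated {ι : Type*} {l : Filter ι} [l.IsCountablyGenerated]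
    (hp : p ≠ ⊤) {f : ι → α → F} {bound : α → ℝ}
    (hf : ∀ᶠ i in l, AEStronglyMeasurable (f i) μ) (hbound : MemLp bound p μ)
    (hle : ∀ᶠ i in l, ∀ᵐ x ∂μ, ‖f i x‖ ≤ bound x)
    (hlim : ∀ᵐ x ∂μ, Tendsto (fun i => f i x) l (𝓝 0)) :
    Tendsto (fun i => eLpNorm (f i) p μ) l (𝓝 0) := by
  rcases eq_or_ne p 0 with rfl | hp0
  · simpa only [eLpNorm_exponent_zero] using tendsto_const_nhds
  lift p to ℝ≥0 using hp
  have hp0 : p ≠ 0 := by simpa using hp0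
  have hpos : (0 : ℝ) < p := by positivity
  have hlint : Tendsto (fun i => ∫⁻ x, ‖f i x‖ₑ ^ (p : ℝ) ∂μ) l (𝓝 (∫⁻ _, 0 ∂μ)) := by
    refine tendsto_lintegral_filter_of_dominated_convergence' (fun x => ‖bound x‖ₑ ^ (p : ℝ))
      (hf.mono fun i hi => hi.enorm.pow_const _) (hle.mono fun i hi => ?_) ?_ ?_
    · filter_upwards [hi] with x hx
      gcongr
      exact enorm_le_iff_norm_le.2 (hx.trans (le_abs_self _))
    · rw [← eLpNorm_nnreal_pow_eq_lintegral hp0]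
      exact (ENNReal.rpow_lt_top_of_nonneg hpos.le hbound.2.ne).ne
    · filter_upwards [hlim] with x hx
      simpa [hpos] using hx.enorm.ennrpow_const (p : ℝ)
  simp only [← eLpNorm_nnreal_pow_eq_lintegral hp0, lintegral_zero] at hlint
  simpa [← ENNReal.rpow_mul, hpos.ne', hpos] using hlint.ennrpow_const (p : ℝ)⁻¹

theorem integral_norm_sq_eq_toReal_eLpNorm_sq {f : α → F}
    (hf : AEStronglyMeasurable f μ) :
    ∫ x, ‖f x‖ ^ 2 ∂μ = (eLpNorm f 2 μ).toReal ^ 2 := by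
  have hpow : eLpNorm f 2 μ ^ 2 = ∫⁻ x, ‖f x‖ₑ ^ 2 ∂μ := by
    simpa using eLpNorm_nnreal_pow_eq_lintegral (f := f) (μ := μ) (two_ne_zero (α := ℝ≥0))
  rw [← ENNReal.toReal_pow, hpow,
    integral_eq_lintegral_of_nonneg_ae (.of_forall fun x => sq_nonneg ‖f x‖) (hf.norm.pow 2)]
  simp only [ENNReal.ofReal_pow (norm_nonneg _), ofReal_norm]

theorem tendsto_integral_norm_sq_zero {ι : Type*} {l : Filter ι} {f : ι → α → F}
    (hf : ∀ i, AEStronglyMeasurable (f i) μ) (hlim : Tendsto (fun i => eLpNorm (f i) 2 μ) l (𝓝 0)) :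
    Tendsto (fun i => ∫ x, ‖f i x‖ ^ 2 ∂μ) l (𝓝 0) := by
  simp only [integral_norm_sq_eq_toReal_eLpNorm_sq (hf _)]
  simpa using ((ENNReal.tendsto_toReal ENNReal.zero_ne_top).comp hlim).pow 2

end Lp

section InnerL2

variable {α ι F : Type*} [MeasurableSpace α] [NormedAddCommGroup F] [InnerProductSpace ℝ F]
  {μ : Measure α} {l : Filter ι} {f g : α → F} {u v : ι → α → F}

theorem integral_inner_eq_inner_toLp (hf : MemLp f 2 μ) (hg : MemLp g 2 μ) :
    ∫ x, ⟪f x, g x⟫ ∂μ = ⟪hf.toLp f, hg.toLp g⟫ := by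
  rw [L2.inner_def]
  refine integral_congr_ae ?_
  filter_upwards [hf.coeFn_toLp, hg.coeFn_toLp] with x hfx hgx
  rw [hfx, hgx]

theorem integrable_inner_of_memLp (hf : MemLp f 2 μ) (hg : MemLp g 2 μ) :
    Integrable (fun x => ⟪f x, g x⟫) μ := by
  refine (L2.integrable_inner (𝕜 := ℝ) (hf.toLp f) (hg.toLp g)).congr ?_
  filter_upwards [hf.coeFn_toLp, hg.coeFn_toLp] with x hfx hgx
  rw [hfx, hgx]

theorem tendsto_integral_inner (hu : ∀ i, MemLp (u i) 2 μ) (hv : ∀ i, MemLp (v i) 2 μ)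
    (hf : MemLp f 2 μ) (hg : MemLp g 2 μ)
    (huf : Tendsto (fun i => eLpNorm (u i - f) 2 μ) l (𝓝 0))
    (hvg : Tendsto (fun i => eLpNorm (v i - g) 2 μ) l (𝓝 0)) :
    Tendsto (fun i => ∫ x, ⟪u i x, v i x⟫ ∂μ) l (𝓝 (∫ x, ⟪f x, g x⟫ ∂μ)) := by
  have hu_lim := (Lp.tendsto_Lp_iff_tendsto_eLpNorm'' u hu f hf).2 huf
  have hv_lim := (Lp.tendsto_Lp_iff_tendsto_eLpNorm'' v hv g hg).2 hvg
  simpa only [integral_inner_eq_inner_toLp (hu _) (hv _), integral_inner_eq_inner_toLp hf hg]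
    using hu_lim.inner hv_lim

end InnerL2

section Translation

variable {G F : Type*} [AddCommGroup G] [TopologicalSpace G] [IsTopologicalAddGroup G]
  [MeasurableSpace G] [BorelSpace G] [NormedAddCommGroup F] {p : ℝ≥0∞} {μ : Measure G}
  [μ.IsAddLeftInvariant] [IsLocallyFiniteMeasure μ] [μ.InnerRegularCompactLTTop]

theorem tendsto_eLpNorm_translate_sub [Fact (1 ≤ p)] (hp : p ≠ ⊤)
    {f : G → F} (hf : MemLp f p μ) :
    Tendsto (fun t => eLpNorm (fun x => f (x - t) - f x) p μ) (𝓝 0) (𝓝 0) := by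
  have : Fact (p ≠ ⊤) := ⟨hp⟩
  have hcont : Continuous fun t : G => DomAddAct.mk (-t) +ᵥ hf.toLp f :=
    (DomAddAct.continuous_mk.comp continuous_neg).vadd continuous_const
  have hlim := tendsto_iff_edist_tendsto_0.1 (hcont.tendsto 0)
  refine hlim.congr fun t => ?_
  have htranslate := hf.comp_measurePreserving (measurePreserving_vadd (-t) μ)
  have hmk : DomAddAct.mk (-t) +ᵥ hf.toLp f = htranslate.toLp _ := DomAddAct.mk_vadd_toLp _ _
  rw [hmk, neg_zero, DomAddAct.mk_zero, zero_vadd, Lp.edist_toLp_toLp]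
  congr 1
  ext x
  simp [neg_add_eq_sub]

end Translation

section Mollification

variable {E F : Type*} [NormedAddCommGroup E] [NormedSpace ℝ E] [FiniteDimensional ℝ E]
  [MeasurableSpace E] [BorelSpace E] {μ : Measure E} [μ.IsAddHaarMeasure]
  [NormedAddCommGroup F] [NormedSpace ℝ F] [CompleteSpace F] {p : ℝ≥0∞}

theorem eLpNorm_normed_convolution_sub_le (hp : 1 ≤ p) (hp' : p ≠ ⊤) {f : E → F}
    (hf : MemLp f p μ) (φ : ContDiffBump (0 : E)) {c : ℝ≥0∞}
    (hc : ∀ t ∈ Metric.ball 0 φ.rOut, eLpNorm (fun x => f (x - t) - f x) p μ ≤ c) :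
    eLpNorm ((φ.normed μ ⋆[lsmul ℝ ℝ, μ] f) - f) p μ ≤ c := by
  set ν : Measure E := μ.withDensity fun t => ENNReal.ofReal (φ.normed μ t) with hν
  have hdensity : Measurable fun t => ENNReal.ofReal (φ.normed μ t) :=
    φ.continuous_normed.measurable.ennreal_ofReal
  have : IsProbabilityMeasure ν := by
    refine ⟨?_⟩
    rw [hν, withDensity_apply _ .univ, Measure.restrict_univ,
      ← ofReal_integral_eq_lintegral_ofReal φ.integrable_normed (.of_forall φ.nonneg_normed),
      φ.integral_normed, ENNReal.ofReal_one]
  have hconv (x : E) : ((φ.normed μ ⋆[lsmul ℝ ℝ, μ] f) - f) x =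
      ∫ t, (f (x - t) - f x) ∂ν := by
    have hshift : Integrable (fun t => φ.normed μ t • f (x - t)) μ :=
      ((hf.comp_measurePreserving (μ.measurePreserving_sub_left x)).locallyIntegrable
        hp).integrable_smul_left_of_hasCompactSupport φ.continuous_normed φ.hasCompactSupport_normed
    rw [hν, integral_withDensity_eq_integral_toReal_smul hdensity (by simp)]
    simp only [ENNReal.toReal_ofReal (φ.nonneg_normed _), smul_sub]
    rw [integral_sub hshift (φ.integrable_normed.smul_const _), φ.integral_normed_smul]
    rfl
  have hmeas : AEStronglyMeasurable (fun z : E × E => f (z.1 - z.2) - f z.1) (μ.prod ν) :=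
    (hf.1.comp_quasiMeasurePreserving
      (quasiMeasurePreserving_sub_of_right_invariant μ ν)).sub hf.1.comp_fst
  rw [funext hconv]
  refine eLpNorm_integral_le_of_ae_le hp hp' hmeas ?_
  rw [hν, ae_withDensity_iff hdensity]
  refine .of_forall fun t ht => hc t ?_
  rw [← φ.support_normed_eq (μ := μ)]
  contrapose! ht
  simp [Function.notMem_support.1 ht]

theorem tendsto_eLpNorm_normed_convolution_sub (hp : 1 ≤ p) (hp' : p ≠ ⊤) {f : E → F}
    (hf : MemLp f p μ) {ι : Type*} {l : Filter ι} {φ : ι → ContDiffBump (0 : E)}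
    (hφ : Tendsto (fun i => (φ i).rOut) l (𝓝 0)) :
    Tendsto (fun i =>
      eLpNorm (((φ i).normed μ ⋆[lsmul ℝ ℝ, μ] f) - f) p μ) l (𝓝 0) := by
  have : Fact (1 ≤ p) := ⟨hp⟩
  refine ENNReal.tendsto_nhds_zero.2 fun ε hε => ?_
  obtain ⟨r, hr, hball⟩ := Metric.eventually_nhds_iff_ball.1
    (ENNReal.tendsto_nhds_zero.1 (tendsto_eLpNorm_translate_sub hp' hf) ε hε)
  filter_upwards [hφ.eventually_lt_const hr] with i hi
  exact eLpNorm_normed_convolution_sub_le hp hp' hf _ fun t ht =>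
    hball t (Metric.ball_subset_ball hi.le ht)

end Mollification

section FDerivConvolution

variable {E F : Type*} [NormedAddCommGroup E] [NormedSpace ℝ E] [FiniteDimensional ℝ E]
  [MeasurableSpace E] [BorelSpace E] {μ : Measure E} [μ.IsAddHaarMeasure]
  [NormedAddCommGroup F] [NormedSpace ℝ F] {ρ : E → ℝ} {u : E → F}

theorem integral_fderiv_smul_translate_eq (hρ : ContDiff ℝ 1 ρ) (hρc : HasCompactSupport ρ)
    (hu : Differentiable ℝ u) (hu' : LocallyIntegrable (fderiv ℝ u) μ) (x e : E) :
    ∫ t, fderiv ℝ ρ t e • u (x - t) ∂μ = ∫ t, ρ t • fderiv ℝ u (x - t) e ∂μ := by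
  have hρ' : Continuous fun t => fderiv ℝ ρ t e :=
    (hρ.continuous_fderiv one_ne_zero).clm_apply continuous_const
  have hu_int : LocallyIntegrable u μ := hu.continuous.locallyIntegrable
  have hfderiv (t : E) : fderiv ℝ (fun t => u (x - t)) t e = -fderiv ℝ u (x - t) e := by
    have hcomp := (hu (x - t)).hasFDerivAt.comp t ((hasFDerivAt_id t).const_sub x)
    have hfd : fderiv ℝ (fun t => u (x - t)) t = _ := hcomp.fderiv
    simp [hfd]
  have h_parts := integral_smul_fderiv_eq_neg_fderiv_smul_of_integrable (μ := μ) (v := e)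
    (f := ρ) (g := fun t => u (x - t))
    ((hρc.fderiv_apply ℝ e).convolutionExists_left (lsmul ℝ ℝ) hρ' hu_int x)
    ?_ (hρc.convolutionExists_left (lsmul ℝ ℝ) hρ.continuous hu_int x)
    (fun t _ => hρ.differentiable one_ne_zero t)
    (fun t _ => (hu _).comp t ((differentiableAt_const x).sub differentiableAt_id))
  · simpa only [hfderiv, smul_neg, integral_neg, neg_inj] using h_parts.symm
  · simp only [hfderiv, smul_neg]
    exact ((hρc.convolutionExists_left (lsmul ℝ ℝ) hρ.continuous hu'
      x).integrable.apply_continuousLinearMap e).neg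

theorem fderiv_convolution_eq_convolution_fderiv (hρ : ContDiff ℝ 1 ρ)
    (hρc : HasCompactSupport ρ) (hu : Differentiable ℝ u)
    (hu' : LocallyIntegrable (fderiv ℝ u) μ) :
    fderiv ℝ (ρ ⋆[lsmul ℝ ℝ, μ] u) = ρ ⋆[lsmul ℝ ℝ, μ] fderiv ℝ u := by
  ext x e
  have hu_int : LocallyIntegrable u μ := hu.continuous.locallyIntegrable
  have hleft := (hρc.fderiv ℝ).convolutionExists_left
    ((lsmul ℝ ℝ).precompL E) (hρ.continuous_fderiv one_ne_zero) hu_int x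
  have hright := hρc.convolutionExists_left (lsmul ℝ ℝ) hρ.continuous hu' x
  rw [(hρc.hasFDerivAt_convolution_left (lsmul ℝ ℝ) hρ hu_int x).fderiv,
    convolution_def, convolution_def, ContinuousLinearMap.integral_apply hleft,
    ContinuousLinearMap.integral_apply hright]
  exact integral_fderiv_smul_translate_eq hρ hρc hu hu' x e

end FDerivConvolution

section Gradient

variable {E : Type*} [NormedAddCommGroup E] [InnerProductSpace ℝ E] {u : E → ℝ}

section Complete

variable [CompleteSpace E]

theorem norm_gradient (u : E → ℝ) (x : E) : ‖∇ u x‖ = ‖fderiv ℝ u x‖ :=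
  LinearIsometryEquiv.norm_map _ _

theorem gradient_eq_zero_of_notMem_tsupport {x : E} (hx : x ∉ tsupport u) : ∇ u x = 0 := by
  rw [gradient, fderiv_of_notMem_tsupport ℝ hx, map_zero]

theorem hasCompactSupport_gradient (hu : HasCompactSupport u) : HasCompactSupport (∇ u) :=
  .intro hu fun _ => gradient_eq_zero_of_notMem_tsupport

theorem continuous_gradient (hu : ContDiff ℝ 1 u) : Continuous (∇ u) :=
  (InnerProductSpace.toDual ℝ E).symm.continuous.comp (hu.continuous_fderiv one_ne_zero)

end Complete

variable [FiniteDimensional ℝ E] [MeasurableSpace E] [BorelSpace E] {μ : Measure E}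

theorem stronglyMeasurable_gradient (u : E → ℝ) : StronglyMeasurable (∇ u) :=
  ((InnerProductSpace.toDual ℝ E).symm.continuous.measurable.comp
    (measurable_fderiv ℝ u)).stronglyMeasurable

theorem gradient_convolution_eq_convolution_gradient [μ.IsAddHaarMeasure] {ρ : E → ℝ}
    (hρ : ContDiff ℝ 1 ρ) (hρc : HasCompactSupport ρ) (hu : Differentiable ℝ u)
    (hu' : LocallyIntegrable (∇ u) μ) :
    ∇ (ρ ⋆[lsmul ℝ ℝ, μ] u) = ρ ⋆[lsmul ℝ ℝ, μ] ∇ u := by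
  have hfderiv : LocallyIntegrable (fderiv ℝ u) μ :=
    hu'.mono (measurable_fderiv ℝ u).aestronglyMeasurable
      (.of_forall fun x => (norm_gradient u x).ge)
  funext x
  refine ext_inner_right ℝ fun e => ?_
  have hint_fderiv :=
    hρc.convolutionExists_left (lsmul ℝ ℝ) hρ.continuous hfderiv x
  have hint_gradient :=
    hρc.convolutionExists_left (lsmul ℝ ℝ) hρ.continuous hu' x
  rw [inner_gradient_left, fderiv_convolution_eq_convolution_fderiv hρ hρc hu hfderiv,
    convolution_def, convolution_def, ContinuousLinearMap.integral_apply hint_fderiv,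
    real_inner_comm, ← integral_inner hint_gradient]
  refine integral_congr_ae (.of_forall fun t => ?_)
  simp [real_inner_smul_right, inner_gradient_right]

end Gradient

section WeightedMeasure

variable {E F : Type*} [MeasurableSpace E] [NormedAddCommGroup F]
  {μ : Measure E} {U D K : Set E} {w : E → ℝ} {p : ℝ≥0∞}

/-- The measure `w dμ` on `U`, against which the Dirichlet energy of `-div(w∇·)` on `U` is an
unweighted integral. -/
noncomputable def weightedMeasure (μ : Measure E) (U : Set E) (w : E → ℝ) : Measure E :=
  (μ.restrict U).withDensity fun x => ENNReal.ofReal (w x)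

theorem weightedMeasure_restrict (hD : MeasurableSet D) (hDU : D ⊆ U) :
    (weightedMeasure μ U w).restrict D = weightedMeasure μ D w := by
  rw [weightedMeasure, weightedMeasure, restrict_withDensity hD, Measure.restrict_restrict hD,
    inter_eq_left.2 hDU]

theorem ae_mem_weightedMeasure (hU : MeasurableSet U) : ∀ᵐ x ∂weightedMeasure μ U w, x ∈ U :=
  (withDensity_absolutelyContinuous _ _).ae_le (ae_restrict_mem hU)

theorem integral_weightedMeasure [TopologicalSpace E] [OpensMeasurableSpace E]
    (hU : MeasurableSet U) (hw : ContinuousOn w U) (hw0 : ∀ x ∈ U, 0 ≤ w x) (f : E → ℝ) :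
    ∫ x, f x ∂weightedMeasure μ U w = ∫ x in U, f x * w x ∂μ := by
  rw [weightedMeasure, integral_withDensity_eq_integral_toReal_smul₀
    (hw.aemeasurable hU).ennreal_ofReal (by simp)]
  refine setIntegral_congr_fun hU fun x hx => ?_
  simp [ENNReal.toReal_ofReal (hw0 x hx), mul_comm]

theorem integrable_weightedMeasure_iff [TopologicalSpace E] [OpensMeasurableSpace E]
    (hU : MeasurableSet U) (hw : ContinuousOn w U) (hw0 : ∀ x ∈ U, 0 ≤ w x) {f : E → ℝ} :
    Integrable f (weightedMeasure μ U w) ↔ IntegrableOn (fun x => f x * w x) U μ := by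
  rw [weightedMeasure, integrable_withDensity_iff_integrable_smul₀'
    (hw.aemeasurable hU).ennreal_ofReal (by simp), ← IntegrableOn]
  refine integrableOn_congr_fun (fun x hx => ?_) hU
  simp [ENNReal.toReal_ofReal (hw0 x hx), mul_comm]

theorem eLpNorm_le_of_restrict_le_smul {ν : Measure E} {c : ℝ≥0∞} (hK : MeasurableSet K)
    (hp : p ≠ ⊤) (hle : ν.restrict K ≤ c • μ) {f : E → F} (hf : ∀ x ∉ K, f x = 0) :
    eLpNorm f p ν ≤ c ^ (1 / p).toReal * eLpNorm f p μ := calc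
  eLpNorm f p ν = eLpNorm f p (ν.restrict K) := by
    rw [← eLpNorm_indicator_eq_eLpNorm_restrict hK,
      indicator_eq_self.2 (Function.support_subset_iff'.2 hf)]
  _ ≤ eLpNorm f p (c • μ) := eLpNorm_mono_measure f hle
  _ = c ^ (1 / p).toReal * eLpNorm f p μ := eLpNorm_smul_measure_of_ne_top hp f c

variable [TopologicalSpace E] [T2Space E] [OpensMeasurableSpace E]

theorem exists_eLpNorm_weightedMeasure_le (hK : IsCompact K) (hKU : K ⊆ U)
    (hw : ContinuousOn w K) (hp : p ≠ ⊤) :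
    ∃ c : ℝ≥0∞, c ≠ ⊤ ∧ ∀ f : E → F, (∀ x ∉ K, f x = 0) →
      eLpNorm f p (weightedMeasure μ U w) ≤ c * eLpNorm f p μ := by
  obtain ⟨C, hC⟩ := hK.bddAbove_image hw
  refine ⟨ENNReal.ofReal C ^ (1 / p).toReal, by simp, fun f =>
    eLpNorm_le_of_restrict_le_smul hK.measurableSet hp ?_⟩
  calc (weightedMeasure μ U w).restrict K = weightedMeasure μ K w :=
        weightedMeasure_restrict hK.measurableSet hKU
    _ ≤ (μ.restrict K).withDensity fun _ => ENNReal.ofReal C :=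
        withDensity_mono <| ae_restrict_of_forall_mem hK.measurableSet fun x hx =>
          ENNReal.ofReal_le_ofReal (hC (mem_image_of_mem w hx))
    _ = ENNReal.ofReal C • μ.restrict K := withDensity_const _
    _ ≤ ENNReal.ofReal C • μ := by gcongr; exact Measure.restrict_le_self

theorem exists_eLpNorm_le_weightedMeasure (hK : IsCompact K) (hKU : K ⊆ U)
    (hw : ContinuousOn w K) (hw0 : ∀ x ∈ K, 0 < w x) (hp : p ≠ ⊤) :
    ∃ c : ℝ≥0∞, c ≠ ⊤ ∧ ∀ f : E → F, (∀ x ∉ K, f x = 0) →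
      eLpNorm f p μ ≤ c * eLpNorm f p (weightedMeasure μ U w) := by
  obtain ⟨C, hC⟩ := hK.bddAbove_image (hw.inv₀ fun x hx => (hw0 x hx).ne')
  refine ⟨ENNReal.ofReal C ^ (1 / p).toReal, by simp, fun f =>
    eLpNorm_le_of_restrict_le_smul hK.measurableSet hp ?_⟩
  calc μ.restrict K = (μ.restrict K).withDensity 1 := withDensity_one.symm
    _ ≤ (μ.restrict K).withDensity (ENNReal.ofReal C • fun x => ENNReal.ofReal (w x)) := by
        refine withDensity_mono <| ae_restrict_of_forall_mem hK.measurableSet fun x hx => ?_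
        have hCx : (w x)⁻¹ ≤ C := hC (mem_image_of_mem _ hx)
        have hone : 1 ≤ C * w x := by
          simpa [(hw0 x hx).ne'] using mul_le_mul_of_nonneg_right hCx (hw0 x hx).le
        simpa [← ENNReal.ofReal_mul' (hw0 x hx).le] using hone
    _ = ENNReal.ofReal C • weightedMeasure μ K w := withDensity_smul' _ _ ENNReal.ofReal_ne_top
    _ = ENNReal.ofReal C • (weightedMeasure μ U w).restrict K := by
        rw [weightedMeasure_restrict hK.measurableSet hKU]
    _ ≤ ENNReal.ofReal C • weightedMeasure μ U w := by gcongr; exact Measure.restrict_le_self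

end WeightedMeasure

section TestClosure

variable {E : Type*} [NormedAddCommGroup E] [InnerProductSpace ℝ E] {U : Set E} {w : E → ℝ}

/-- `v` is a test function on `U`, that is, `v ∈ C_c^∞(U)`. -/
structure IsTestFun (U : Set E) (v : E → ℝ) : Prop where
  contDiff : ContDiff ℝ (⊤ : ℕ∞) v
  hasCompactSupport : HasCompactSupport v
  tsupport_subset : tsupport v ⊆ U

namespace IsTestFun

variable {v : E → ℝ}

theorem mono (hv : IsTestFun U v) {V : Set E} (hUV : U ⊆ V) : IsTestFun V v :=
  ⟨hv.contDiff, hv.hasCompactSupport, hv.tsupport_subset.trans hUV⟩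

theorem contDiff_one (hv : IsTestFun U v) : ContDiff ℝ 1 v := hv.contDiff.of_le (by simp)

theorem differentiable (hv : IsTestFun U v) : Differentiable ℝ v :=
  hv.contDiff_one.differentiable one_ne_zero

theorem gradient_eq_zero [CompleteSpace E] (hv : IsTestFun U v) {x : E} (hx : x ∉ U) :
    ∇ v x = 0 :=
  gradient_eq_zero_of_notMem_tsupport fun h => hx (hv.tsupport_subset h)

theorem memLp [MeasurableSpace E] [OpensMeasurableSpace E] {μ : Measure E}
    [IsFiniteMeasureOnCompacts μ] (hv : IsTestFun U v) (p : ℝ≥0∞) : MemLp v p μ :=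
  hv.contDiff.continuous.memLp_of_hasCompactSupport hv.hasCompactSupport

end IsTestFun

variable [FiniteDimensional ℝ E] [MeasurableSpace E] {μ : Measure E}

/-- The distance of `u` and `v` in the norm of `H¹(U;w)`, as a sum of the weighted `L²` distance of
the gradients and the `L²` distance of the functions. It may be infinite. -/
noncomputable def energyDist (μ : Measure E) (U : Set E) (w u v : E → ℝ) : ℝ≥0∞ :=
  eLpNorm (∇ u - ∇ v) 2 (weightedMeasure μ U w) + eLpNorm (u - v) 2 (μ.restrict U)

/-- `u` lies in `H₀¹(U;w)`, the closure of `C_c^∞(U)` in `H¹(U;w)`. Only the values of `u` and of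
its classical gradient in `U` matter. -/
def MemTestClosure (μ : Measure E) (U : Set E) (w u : E → ℝ) : Prop :=
  ∃ v : ℕ → E → ℝ, (∀ n, IsTestFun U (v n)) ∧
    Tendsto (fun n => energyDist μ U w (v n) u) atTop (𝓝 0)

theorem MemTestClosure.exists_tendsto {u : E → ℝ} (hu : MemTestClosure μ U w u) :
    ∃ v : ℕ → E → ℝ, (∀ n, IsTestFun U (v n)) ∧
      Tendsto (fun n => eLpNorm (∇ (v n) - ∇ u) 2 (weightedMeasure μ U w)) atTop (𝓝 0) ∧
      Tendsto (fun n => eLpNorm (v n - u) 2 (μ.restrict U)) atTop (𝓝 0) := by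
  obtain ⟨v, hv, hlim⟩ := hu
  exact ⟨v, hv, tendsto_of_tendsto_of_tendsto_of_le_of_le tendsto_const_nhds hlim
    (fun _ => zero_le) (fun _ => le_self_add),
    tendsto_of_tendsto_of_tendsto_of_le_of_le tendsto_const_nhds hlim (fun _ => zero_le)
      (fun _ => le_add_self)⟩

variable [BorelSpace E]

theorem energyDist_triangle {u v z : E → ℝ} (hu : AEStronglyMeasurable u (μ.restrict U))
    (hv : AEStronglyMeasurable v (μ.restrict U)) (hz : AEStronglyMeasurable z (μ.restrict U)) :
    energyDist μ U w u z ≤ energyDist μ U w u v + energyDist μ U w v z := by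
  have hgrad := eLpNorm_add_le (p := 2) (μ := weightedMeasure μ U w)
    ((stronglyMeasurable_gradient u).sub (stronglyMeasurable_gradient v)).aestronglyMeasurable
    ((stronglyMeasurable_gradient v).sub (stronglyMeasurable_gradient z)).aestronglyMeasurable
    one_le_two
  have hfun := eLpNorm_add_le (p := 2) (hu.sub hv) (hv.sub hz) one_le_two
  rw [sub_add_sub_cancel] at hgrad hfun
  exact (add_le_add hgrad hfun).trans_eq (add_add_add_comm _ _ _ _)

theorem IsTestFun.memLp_gradient [IsFiniteMeasureOnCompacts μ] {v : E → ℝ} (hv : IsTestFun U v)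
    (hw : ContinuousOn w U) {p : ℝ≥0∞} (hp : p ≠ ⊤) :
    MemLp (∇ v) p (weightedMeasure μ U w) := by
  obtain ⟨c, hc, hle⟩ := exists_eLpNorm_weightedMeasure_le (F := E) (μ := μ)
    hv.hasCompactSupport.isCompact hv.tsupport_subset (hw.mono hv.tsupport_subset) hp
  have hLp : MemLp (∇ v) p μ := (continuous_gradient hv.contDiff_one).memLp_of_hasCompactSupport
    (hasCompactSupport_gradient hv.hasCompactSupport)
  exact ⟨(stronglyMeasurable_gradient v).aestronglyMeasurable,
    (hle _ fun _ => gradient_eq_zero_of_notMem_tsupport).trans_lt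
      (ENNReal.mul_lt_top hc.lt_top hLp.2)⟩

namespace MemTestClosure

theorem of_tendsto {u : E → ℝ} {f : ℕ → E → ℝ}
    (hf : ∀ n, MemTestClosure μ U w (f n))
    (hfm : ∀ n, AEStronglyMeasurable (f n) (μ.restrict U))
    (hu : AEStronglyMeasurable u (μ.restrict U))
    (hlim : Tendsto (fun n => energyDist μ U w (f n) u) atTop (𝓝 0)) :
    MemTestClosure μ U w u := by
  obtain ⟨δ, -, hδ, hδ0⟩ := exists_seq_strictAnti_tendsto' (zero_lt_one (α := ℝ≥0∞))
  have hclose (n : ℕ) : ∃ v, IsTestFun U v ∧ energyDist μ U w v (f n) ≤ δ n := by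
    obtain ⟨v, hv, hlim⟩ := hf n
    obtain ⟨k, hk⟩ := (ENNReal.tendsto_nhds_zero.1 hlim (δ n) (hδ n).1).exists
    exact ⟨v k, hv k, hk⟩
  choose v hv hvf using hclose
  refine ⟨v, hv, tendsto_of_tendsto_of_tendsto_of_le_of_le tendsto_const_nhds
    (by simpa using hδ0.add hlim) (fun _ => zero_le) fun n => ?_⟩
  exact (energyDist_triangle (hv n).contDiff.continuous.aestronglyMeasurable (hfm n) hu).trans
    (by gcongr; exact hvf n)

theorem memLp [IsFiniteMeasureOnCompacts μ] {u : E → ℝ} (hu : MemTestClosure μ U w u)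
    (hum : AEStronglyMeasurable u (μ.restrict U)) : MemLp u 2 (μ.restrict U) := by
  obtain ⟨v, hv, hlim⟩ := hu
  obtain ⟨n, hn⟩ := (ENNReal.tendsto_nhds_zero.1 hlim 1 one_pos).exists
  have hsub : MemLp (v n - u) 2 (μ.restrict U) :=
    ⟨(hv n).contDiff.continuous.aestronglyMeasurable.sub hum,
      (le_add_self.trans hn).trans_lt ENNReal.one_lt_top⟩
  simpa using ((hv n).memLp 2).sub hsub

theorem memLp_gradient [IsFiniteMeasureOnCompacts μ] {u : E → ℝ} (hu : MemTestClosure μ U w u)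
    (hw : ContinuousOn w U) : MemLp (∇ u) 2 (weightedMeasure μ U w) := by
  obtain ⟨v, hv, hlim⟩ := hu
  obtain ⟨n, hn⟩ := (ENNReal.tendsto_nhds_zero.1 hlim 1 one_pos).exists
  have hsub : MemLp (∇ (v n) - ∇ u) 2 (weightedMeasure μ U w) :=
    ⟨((stronglyMeasurable_gradient _).sub (stronglyMeasurable_gradient u)).aestronglyMeasurable,
      (le_self_add.trans hn).trans_lt ENNReal.one_lt_top⟩
  simpa using ((hv n).memLp_gradient hw ENNReal.ofNat_ne_top).sub hsub

theorem exists_tendsto_integral {u : E → ℝ} (hu : MemTestClosure μ U w u)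
    (hum : AEStronglyMeasurable u (μ.restrict U)) :
    ∃ v : ℕ → E → ℝ, (∀ n, IsTestFun U (v n)) ∧
      Tendsto (fun n => ∫ x, ‖∇ (v n) x - ∇ u x‖ ^ 2 ∂weightedMeasure μ U w +
        ∫ x in U, (v n x - u x) ^ 2 ∂μ) atTop (𝓝 0) := by
  obtain ⟨v, hv, hgrad, hfun⟩ := hu.exists_tendsto
  have hgrad_int := tendsto_integral_norm_sq_zero (fun n => ((stronglyMeasurable_gradient (v n)).sub
    (stronglyMeasurable_gradient u)).aestronglyMeasurable) hgrad
  have hfun_int := tendsto_integral_norm_sq_zero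
    (fun n => (hv n).contDiff.continuous.aestronglyMeasurable.sub hum) hfun
  exact ⟨v, hv, by simpa using hgrad_int.add hfun_int⟩

end MemTestClosure

variable [μ.IsAddHaarMeasure]

theorem tsupport_normed_convolution_subset (φ : ContDiffBump (0 : E)) (u : E → ℝ) :
    tsupport (φ.normed μ ⋆[lsmul ℝ ℝ, μ] u) ⊆
      Metric.cthickening φ.rOut (tsupport u) := by
  refine closure_minimal (fun x hx => ?_) Metric.isClosed_cthickening
  obtain ⟨s, hs, t, ht, rfl⟩ :=
    mem_add.1 (support_convolution_subset (lsmul ℝ ℝ) hx)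
  rw [φ.support_normed_eq, mem_ball_zero_iff] at hs
  refine Metric.mem_cthickening_of_dist_le _ t _ _ (subset_tsupport u ht) ?_
  simpa [dist_eq_norm] using hs.le

theorem isTestFun_normed_convolution {φ : ContDiffBump (0 : E)} {u : E → ℝ}
    (hu : LocallyIntegrable u μ) (huc : HasCompactSupport u)
    (hU : Metric.cthickening φ.rOut (tsupport u) ⊆ U) :
    IsTestFun U (φ.normed μ ⋆[lsmul ℝ ℝ, μ] u) where
  contDiff := φ.hasCompactSupport_normed.contDiff_convolution_left _ φ.contDiff_normed hu
  hasCompactSupport := huc.isCompact.cthickening.of_isClosed_subset (isClosed_tsupport _)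
    (tsupport_normed_convolution_subset φ u)
  tsupport_subset := (tsupport_normed_convolution_subset φ u).trans hU

theorem energyDist_normed_convolution_le {φ : ContDiffBump (0 : E)} {K : Set E} {c : ℝ≥0∞}
    {u : E → ℝ} (hu : Differentiable ℝ u) (hgrad : LocallyIntegrable (∇ u) μ)
    (hK : Metric.cthickening φ.rOut (tsupport u) ⊆ K)
    (hle : ∀ f : E → E, (∀ x ∉ K, f x = 0) →
      eLpNorm f 2 (weightedMeasure μ U w) ≤ c * eLpNorm f 2 μ) :
    energyDist μ U w (φ.normed μ ⋆[lsmul ℝ ℝ, μ] u) u ≤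
      c * eLpNorm ((φ.normed μ ⋆[lsmul ℝ ℝ, μ] ∇ u) - ∇ u) 2 μ +
        eLpNorm ((φ.normed μ ⋆[lsmul ℝ ℝ, μ] u) - u) 2 μ := by
  rw [← gradient_convolution_eq_convolution_gradient (φ.contDiff_normed (n := 1))
    φ.hasCompactSupport_normed hu hgrad]
  refine add_le_add (hle _ fun x hx => ?_) (eLpNorm_mono_measure _ Measure.restrict_le_self)
  rw [Pi.sub_apply, gradient_eq_zero_of_notMem_tsupport fun h =>
      hx (hK (tsupport_normed_convolution_subset φ u h)),
    gradient_eq_zero_of_notMem_tsupport fun h => hx (hK (Metric.self_subset_cthickening _ h)),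
    sub_zero]

theorem memTestClosure_of_hasCompactSupport (hU : IsOpen U) (hw : ContinuousOn w U)
    {u : E → ℝ} (hu : Differentiable ℝ u) (huc : HasCompactSupport u) (huU : tsupport u ⊆ U)
    (hgrad : MemLp (∇ u) 2 μ) : MemTestClosure μ U w u := by
  obtain ⟨r, hr, hrU⟩ := huc.isCompact.exists_cthickening_subset_open hU huU
  let φ (n : ℕ) : ContDiffBump (0 : E) :=
    ⟨r / (n + 1) / 2, r / (n + 1), by positivity, half_lt_self (by positivity)⟩
  have hφ : Tendsto (fun n => (φ n).rOut) atTop (𝓝 0) := by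
    simpa [φ, div_eq_mul_inv] using
      tendsto_one_div_add_atTop_nhds_zero_nat (𝕜 := ℝ).const_mul r
  have hφr (n : ℕ) : Metric.cthickening (φ n).rOut (tsupport u) ⊆
      Metric.cthickening r (tsupport u) :=
    Metric.cthickening_mono (div_le_self hr.le (by simp)) _
  have huLp : MemLp u 2 μ := hu.continuous.memLp_of_hasCompactSupport huc
  obtain ⟨c, hc, hle⟩ := exists_eLpNorm_weightedMeasure_le (F := E) (μ := μ) (p := 2)
    huc.isCompact.cthickening hrU (hw.mono hrU) ENNReal.ofNat_ne_top
  refine ⟨fun n => (φ n).normed μ ⋆[lsmul ℝ ℝ, μ] u, fun n =>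
    isTestFun_normed_convolution hu.continuous.locallyIntegrable huc ((hφr n).trans hrU), ?_⟩
  have hgrad_lim :=
    tendsto_eLpNorm_normed_convolution_sub one_le_two ENNReal.ofNat_ne_top hgrad hφ
  have hfun_lim := tendsto_eLpNorm_normed_convolution_sub one_le_two ENNReal.ofNat_ne_top huLp hφ
  refine tendsto_of_tendsto_of_tendsto_of_le_of_le tendsto_const_nhds ?_ (fun _ => zero_le)
    fun n => energyDist_normed_convolution_le hu (hgrad.locallyIntegrable one_le_two) (hφr n) hle
  simpa using (ENNReal.Tendsto.const_mul hgrad_lim (.inr hc)).add hfun_lim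

end TestClosure

section SmoothCut

variable {ε t : ℝ}

/-- A smooth truncation at height `ε > 0` of the identity of `ℝ`: it vanishes on `[-ε, ε]` and is
the identity where `2 * ε ^ 2 ≤ t ^ 2`. Its derivative is bounded uniformly in `ε`. -/
noncomputable def smoothCut (ε t : ℝ) : ℝ := t * Real.smoothTransition ((t / ε) ^ 2 - 1)

theorem smoothCut_of_abs_le (h : |t| ≤ ε) : smoothCut ε t = 0 := by
  have hsq : (t / ε) ^ 2 ≤ 1 := by
    rw [sq_le_one_iff_abs_le_one, abs_div]
    exact div_le_one_of_le₀ (h.trans (le_abs_self ε)) (abs_nonneg ε)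
  rw [smoothCut, Real.smoothTransition.zero_of_nonpos (sub_nonpos.2 hsq), mul_zero]

theorem smoothCut_of_two_mul_sq_le (hε : 0 < ε) (h : 2 * ε ^ 2 ≤ t ^ 2) : smoothCut ε t = t := by
  have hsq : 1 ≤ (t / ε) ^ 2 - 1 := by
    rw [le_sub_iff_add_le, div_pow, le_div_iff₀ (by positivity)]
    linarith
  rw [smoothCut, Real.smoothTransition.one_of_one_le hsq, mul_one]

theorem abs_smoothCut_le (ε t : ℝ) : |smoothCut ε t| ≤ |t| := by
  rw [smoothCut, abs_mul, abs_of_nonneg (Real.smoothTransition.nonneg _)]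
  exact mul_le_of_le_one_right (abs_nonneg t) (Real.smoothTransition.le_one _)

theorem hasDerivAt_smoothCut (ε t : ℝ) :
    HasDerivAt (smoothCut ε) (Real.smoothTransition ((t / ε) ^ 2 - 1) +
      2 * (t / ε) ^ 2 * deriv Real.smoothTransition ((t / ε) ^ 2 - 1)) t := by
  have houter : HasDerivAt Real.smoothTransition _ ((t / ε) ^ 2 - 1) :=
    ((Real.smoothTransition.contDiff (n := 1)).differentiable one_ne_zero _).hasDerivAt
  have hinner : HasDerivAt (fun t : ℝ => (t / ε) ^ 2 - 1) (2 * (t / ε) * (1 / ε)) t := by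
    simpa using (((hasDerivAt_id t).div_const ε).pow 2).sub_const 1
  refine ((hasDerivAt_id t).mul (houter.comp t hinner)).congr_deriv ?_
  simp only [id_eq, Function.comp_apply]
  ring

theorem deriv_smoothCut_of_two_mul_sq_lt (hε : 0 < ε) (h : 2 * ε ^ 2 < t ^ 2) :
    deriv (smoothCut ε) t = 1 := by
  have heq : smoothCut ε =ᶠ[𝓝 t] id :=
    ((continuous_pow 2).continuousAt.eventually_const_lt h).mono fun s hs =>
      smoothCut_of_two_mul_sq_le hε hs.le
  rw [heq.deriv_eq, deriv_id]

theorem exists_abs_deriv_smoothCut_le : ∃ C, ∀ ε t, |deriv (smoothCut ε) t| ≤ C := by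
  have hcont : Continuous (deriv Real.smoothTransition) :=
    (Real.smoothTransition.contDiff (n := 1)).continuous_deriv le_rfl
  obtain ⟨M, hM⟩ := isCompact_Icc.exists_bound_of_continuousOn (s := Icc (-1 : ℝ) 1)
    hcont.continuousOn
  refine ⟨1 + 4 * M, fun ε t => ?_⟩
  rw [(hasDerivAt_smoothCut ε t).deriv]
  have hM0 : 0 ≤ M := (norm_nonneg _).trans (hM 0 (by simp))
  set s := (t / ε) ^ 2
  have hs0 : 0 ≤ s := sq_nonneg _
  have hsecond : |2 * s * deriv Real.smoothTransition (s - 1)| ≤ 4 * M := by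
    rcases le_or_gt s 2 with hs2 | hs2
    · rw [abs_mul, abs_of_nonneg (by positivity)]
      have := hM (s - 1) ⟨by linarith, by linarith⟩
      rw [Real.norm_eq_abs] at this
      nlinarith [abs_nonneg (deriv Real.smoothTransition (s - 1))]
    · have heq : Real.smoothTransition =ᶠ[𝓝 (s - 1)] fun _ => 1 :=
        (eventually_gt_nhds (by linarith)).mono fun r (hr : 1 < r) =>
          Real.smoothTransition.one_of_one_le hr.le
      simpa [heq.deriv_eq] using hM0
  refine (abs_add_le _ _).trans (add_le_add ?_ hsecond)
  rw [abs_of_nonneg (Real.smoothTransition.nonneg _)]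
  exact Real.smoothTransition.le_one _

theorem eventually_two_mul_sq_lt {ι : Type*} {l : Filter ι} {ε : ι → ℝ}
    (hε : Tendsto ε l (𝓝 0)) (ht : t ≠ 0) : ∀ᶠ i in l, 2 * ε i ^ 2 < t ^ 2 := by
  have hlim : Tendsto (fun i => 2 * ε i ^ 2) l (𝓝 0) := by simpa using (hε.pow 2).const_mul 2
  exact hlim.eventually_lt_const (by positivity)

end SmoothCut

section Truncation

section Gradient

variable {E : Type*} [NormedAddCommGroup E] [InnerProductSpace ℝ E]

theorem hasGradientAt_comp_of_hasDerivAt [CompleteSpace E] {f : ℝ → ℝ} {f' : ℝ}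
    {u : E → ℝ} {u' x : E} (hf : HasDerivAt f f' (u x)) (hu : HasGradientAt u u' x) :
    HasGradientAt (fun y => f (u y)) (f' • u') x := by
  rw [hasGradientAt_iff_hasFDerivAt, map_smulₛₗ]
  exact hf.comp_hasFDerivAt x hu.hasFDerivAt

theorem differentiable_of_tsupport_subset {U : Set E} {u : E → ℝ} (hU : IsOpen U)
    (hu : DifferentiableOn ℝ u U) (huU : tsupport u ⊆ U) : Differentiable ℝ u := fun x => by
  by_cases hx : x ∈ tsupport u
  · exact hu.differentiableAt (hU.mem_nhds (huU hx))
  · exact (HasFDerivAt.of_notMem_tsupport ℝ hx).differentiableAt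

end Gradient

/-- The truncation at height `ε` of `Φ` restricted to `D`, extended by zero. -/
noncomputable def nodalCut {E : Type*} (D : Set E) (Φ : E → ℝ) (ε : ℝ) : E → ℝ :=
  D.indicator fun x => smoothCut ε (Φ x)

section Support

variable {E : Type*} [TopologicalSpace E] {D : Set E} {Φ : E → ℝ} {ε : ℝ}

theorem isCompact_closure_inter_le_abs (hDc : IsCompact (closure D))
    (hΦ : ContinuousOn Φ (closure D)) : IsCompact (closure D ∩ {x | ε ≤ |Φ x|}) :=
  hDc.of_isClosed_subset (hΦ.abs.preimage_isClosed_of_isClosed isClosed_closure isClosed_Ici)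
    inter_subset_left

theorem closure_inter_le_abs_subset (hD : IsOpen D) (hΦ0 : ∀ x ∈ frontier D, Φ x = 0)
    (hε : 0 < ε) : closure D ∩ {x | ε ≤ |Φ x|} ⊆ D := by
  rintro x ⟨hxD, hx : ε ≤ |Φ x|⟩
  by_contra hxD'
  rw [hΦ0 x (hD.frontier_eq ▸ ⟨hxD, hxD'⟩), abs_zero] at hx
  exact hx.not_gt hε

theorem support_nodalCut_subset :
    Function.support (nodalCut D Φ ε) ⊆ closure D ∩ {x | ε ≤ |Φ x|} := by
  intro x hx
  rw [nodalCut, support_indicator] at hx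
  refine ⟨subset_closure hx.1, ?_⟩
  by_contra h
  exact hx.2 (smoothCut_of_abs_le (not_le.1 h).le)

theorem tsupport_nodalCut_subset (hΦ : ContinuousOn Φ (closure D)) :
    tsupport (nodalCut D Φ ε) ⊆ closure D ∩ {x | ε ≤ |Φ x|} :=
  closure_minimal support_nodalCut_subset
    (hΦ.abs.preimage_isClosed_of_isClosed isClosed_closure isClosed_Ici)

theorem tendsto_eLpNorm_nodalCut_sub [MeasurableSpace E] [OpensMeasurableSpace E] {μ : Measure E}
    (hD : IsOpen D) (hΦ : ContinuousOn Φ D) (hne : ∀ x ∈ D, Φ x ≠ 0)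
    (hΦ2 : MemLp Φ 2 (μ.restrict D)) {ε : ℕ → ℝ} (hε : ∀ n, 0 < ε n)
    (hε0 : Tendsto ε atTop (𝓝 0)) :
    Tendsto (fun n => eLpNorm (nodalCut D Φ (ε n) - Φ) 2 (μ.restrict D)) atTop (𝓝 0) := by
  have hcut (n : ℕ) : AEStronglyMeasurable (nodalCut D Φ (ε n)) (μ.restrict D) :=
    (ContinuousOn.congr (fun x hx => ContinuousAt.comp_continuousWithinAt
      (hasDerivAt_smoothCut (ε n) (Φ x)).continuousAt (hΦ x hx)) fun x hx =>
        indicator_of_mem hx _).aestronglyMeasurable hD.measurableSet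
  refine tendsto_eLpNorm_zero_of_dominated ENNReal.ofNat_ne_top
    (.of_forall fun n => (hcut n).sub hΦ2.1) (hΦ2.norm.const_mul 2)
    (.of_forall fun n => ae_restrict_of_forall_mem hD.measurableSet fun x hx => ?_)
    (ae_restrict_of_forall_mem hD.measurableSet fun x hx => ?_)
  · rw [Pi.sub_apply, nodalCut, indicator_of_mem hx, two_mul]
    exact norm_sub_le_of_le (abs_smoothCut_le _ _) le_rfl
  · refine tendsto_const_nhds.congr' ?_
    filter_upwards [eventually_two_mul_sq_lt hε0 (hne x hx)] with n hn
    rw [Pi.sub_apply, nodalCut, indicator_of_mem hx, smoothCut_of_two_mul_sq_le (hε n) hn.le,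
      sub_self]

end Support

section Closure

variable {E : Type*} [NormedAddCommGroup E] [InnerProductSpace ℝ E] {D : Set E}
  {w Φ : E → ℝ} {ε : ℝ}

theorem differentiable_nodalCut (hD : IsOpen D) (hΦc : ContinuousOn Φ (closure D))
    (hΦ0 : ∀ x ∈ frontier D, Φ x = 0) (hΦ : DifferentiableOn ℝ Φ D) (hε : 0 < ε) :
    Differentiable ℝ (nodalCut D Φ ε) := by
  refine differentiable_of_tsupport_subset hD (fun x hx => ?_)
    ((tsupport_nodalCut_subset hΦc).trans (closure_inter_le_abs_subset hD hΦ0 hε))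
  have hcut := (hasDerivAt_smoothCut ε (Φ x)).differentiableAt
  exact (DifferentiableAt.comp_differentiableWithinAt x hcut (hΦ x hx)).congr
    (fun y hy => indicator_of_mem hy _) (indicator_of_mem hx _)

theorem gradient_nodalCut [CompleteSpace E] (hD : IsOpen D) (hΦ : DifferentiableOn ℝ Φ D)
    {x : E} (hx : x ∈ D) :
    ∇ (nodalCut D Φ ε) x = deriv (smoothCut ε) (Φ x) • ∇ Φ x := by
  have hcut := (hasDerivAt_smoothCut ε (Φ x)).differentiableAt.hasDerivAt
  have hgrad := hasGradientAt_comp_of_hasDerivAt hcut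
    (hΦ.hasGradientAt (hD.mem_nhds hx))
  exact (hgrad.congr_of_eventuallyEq (eqOn_indicator.eventuallyEq_of_mem (hD.mem_nhds hx))).gradient

variable [FiniteDimensional ℝ E] [MeasurableSpace E] [BorelSpace E] {μ : Measure E}

theorem memTestClosure_of_memLp_gradient [μ.IsAddHaarMeasure] {U : Set E} (hU : IsOpen U)
    (hw : ContinuousOn w U) (hw0 : ∀ x ∈ U, 0 < w x) {u : E → ℝ} (hu : Differentiable ℝ u)
    (huc : HasCompactSupport u) (huU : tsupport u ⊆ U)
    (hgrad : MemLp (∇ u) 2 (weightedMeasure μ U w)) : MemTestClosure μ U w u := by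
  obtain ⟨c, hc, hle⟩ := exists_eLpNorm_le_weightedMeasure (F := E) (μ := μ) (p := 2)
    huc.isCompact huU (hw.mono huU) (fun x hx => hw0 x (huU hx)) ENNReal.ofNat_ne_top
  exact memTestClosure_of_hasCompactSupport hU hw hu huc huU
    ⟨(stronglyMeasurable_gradient u).aestronglyMeasurable,
      (hle _ fun _ => gradient_eq_zero_of_notMem_tsupport).trans_lt
        (ENNReal.mul_lt_top hc.lt_top hgrad.2)⟩

theorem memTestClosure_nodalCut [μ.IsAddHaarMeasure] (hD : IsOpen D) (hDc : IsCompact (closure D))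
    (hw : ContinuousOn w D) (hw0 : ∀ x ∈ D, 0 < w x) (hΦc : ContinuousOn Φ (closure D))
    (hΦ0 : ∀ x ∈ frontier D, Φ x = 0) (hΦ : DifferentiableOn ℝ Φ D)
    (hgrad : MemLp (∇ Φ) 2 (weightedMeasure μ D w)) (hε : 0 < ε) :
    MemTestClosure μ D w (nodalCut D Φ ε) := by
  obtain ⟨C, hC⟩ := exists_abs_deriv_smoothCut_le
  refine memTestClosure_of_memLp_gradient hD hw hw0 (differentiable_nodalCut hD hΦc hΦ0 hΦ hε)
    ((isCompact_closure_inter_le_abs hDc hΦc).of_isClosed_subset (isClosed_tsupport _)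
      (tsupport_nodalCut_subset hΦc))
    ((tsupport_nodalCut_subset hΦc).trans (closure_inter_le_abs_subset hD hΦ0 hε))
    (hgrad.of_le_mul (c := C) (stronglyMeasurable_gradient _).aestronglyMeasurable ?_)
  filter_upwards [ae_mem_weightedMeasure hD.measurableSet] with x hx
  rw [gradient_nodalCut hD hΦ hx, norm_smul, Real.norm_eq_abs]
  gcongr
  exact hC ε _

theorem tendsto_eLpNorm_gradient_nodalCut_sub (hD : IsOpen D) (hΦ : DifferentiableOn ℝ Φ D)
    (hne : ∀ x ∈ D, Φ x ≠ 0) (hgrad : MemLp (∇ Φ) 2 (weightedMeasure μ D w)) {ε : ℕ → ℝ}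
    (hε : ∀ n, 0 < ε n) (hε0 : Tendsto ε atTop (𝓝 0)) :
    Tendsto (fun n => eLpNorm (∇ (nodalCut D Φ (ε n)) - ∇ Φ) 2 (weightedMeasure μ D w))
      atTop (𝓝 0) := by
  obtain ⟨C, hC⟩ := exists_abs_deriv_smoothCut_le
  have hmem := ae_mem_weightedMeasure (μ := μ) (w := w) hD.measurableSet
  refine tendsto_eLpNorm_zero_of_dominated ENNReal.ofNat_ne_top
    (.of_forall fun n => ((stronglyMeasurable_gradient _).sub
      (stronglyMeasurable_gradient Φ)).aestronglyMeasurable) (hgrad.norm.const_mul (C + 1))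
    (.of_forall fun n => hmem.mono fun x hx => ?_) (hmem.mono fun x hx => ?_)
  · rw [Pi.sub_apply, gradient_nodalCut hD hΦ hx, add_one_mul]
    refine norm_sub_le_of_le ?_ le_rfl
    rw [norm_smul, Real.norm_eq_abs]
    gcongr
    exact hC _ _
  · refine tendsto_const_nhds.congr' ?_
    filter_upwards [eventually_two_mul_sq_lt hε0 (hne x hx)] with n hn
    rw [Pi.sub_apply, gradient_nodalCut hD hΦ hx, deriv_smoothCut_of_two_mul_sq_lt (hε n) hn,
      one_smul, sub_self]

theorem memTestClosure_of_eq_zero_on_frontier [μ.IsAddHaarMeasure] (hD : IsOpen D)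
    (hDc : IsCompact (closure D)) (hw : ContinuousOn w D) (hw0 : ∀ x ∈ D, 0 < w x)
    (hΦc : ContinuousOn Φ (closure D)) (hΦ0 : ∀ x ∈ frontier D, Φ x = 0)
    (hΦ : DifferentiableOn ℝ Φ D) (hne : ∀ x ∈ D, Φ x ≠ 0) (hΦ2 : MemLp Φ 2 (μ.restrict D))
    (hgrad : MemLp (∇ Φ) 2 (weightedMeasure μ D w)) : MemTestClosure μ D w Φ := by
  have hε (n : ℕ) : (0 : ℝ) < 1 / (n + 1) := by positivity
  have hε0 := tendsto_one_div_add_atTop_nhds_zero_nat (𝕜 := ℝ)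
  refine .of_tendsto (fun n => memTestClosure_nodalCut hD hDc hw hw0 hΦc hΦ0 hΦ hgrad (hε n))
    (fun n => (differentiable_nodalCut hD hΦc hΦ0 hΦ (hε n)).continuous.aestronglyMeasurable)
    hΦ2.1 ?_
  simpa [energyDist] using (tendsto_eLpNorm_gradient_nodalCut_sub hD hΦ hne hgrad hε hε0).add
    (tendsto_eLpNorm_nodalCut_sub hD hΦ.continuousOn hne hΦ2 hε hε0)

end Closure

end Truncation

section WeakSolution

variable {E : Type*} [NormedAddCommGroup E] [InnerProductSpace ℝ E] [FiniteDimensional ℝ E]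
  [MeasurableSpace E] {μ : Measure E} {U : Set E} {w u : E → ℝ} {l : ℝ}

/-- `u` has finite weighted energy in `U` and solves `-div(w∇u) = l * u` weakly there, with its
classical gradient as weak gradient. No boundary condition is imposed. -/
structure IsWeakSolution (μ : Measure E) (U : Set E) (w u : E → ℝ) (l : ℝ) : Prop where
  memLp : MemLp u 2 (μ.restrict U)
  memLp_gradient : MemLp (∇ u) 2 (weightedMeasure μ U w)
  integral_inner_gradient : ∀ v, IsTestFun U v →
    ∫ x, ⟪∇ u x, ∇ v x⟫ ∂weightedMeasure μ U w = l * ∫ x in U, ⟪u x, v x⟫ ∂μ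

namespace IsWeakSolution

theorem mono (hu : IsWeakSolution μ U w u l) {D : Set E} (hD : MeasurableSet D) (hDU : D ⊆ U) :
    IsWeakSolution μ D w u l where
  memLp := hu.memLp.mono_measure (Measure.restrict_mono hDU le_rfl)
  memLp_gradient := by
    rw [← weightedMeasure_restrict hD hDU]
    exact hu.memLp_gradient.restrict D
  integral_inner_gradient v hv := by
    have hgrad (x : E) (hx : x ∉ D) : ⟪∇ u x, ∇ v x⟫ = 0 := by
      rw [hv.gradient_eq_zero hx, inner_zero_right]
    have hval (x : E) (hx : x ∉ D) : ⟪u x, v x⟫ = 0 := by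
      rw [image_eq_zero_of_notMem_tsupport fun h => hx (hv.tsupport_subset h), inner_zero_right]
    calc ∫ x, ⟪∇ u x, ∇ v x⟫ ∂weightedMeasure μ D w
        = ∫ x in D, ⟪∇ u x, ∇ v x⟫ ∂weightedMeasure μ U w := by
          rw [weightedMeasure_restrict hD hDU]
      _ = ∫ x, ⟪∇ u x, ∇ v x⟫ ∂weightedMeasure μ U w :=
          setIntegral_eq_integral_of_forall_compl_eq_zero hgrad
      _ = l * ∫ x in U, ⟪u x, v x⟫ ∂μ := hu.integral_inner_gradient v (hv.mono hDU)
      _ = l * ∫ x in D, ⟪u x, v x⟫ ∂μ := by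
          rw [← Measure.restrict_restrict_of_subset hDU,
            setIntegral_eq_integral_of_forall_compl_eq_zero hval]

variable [BorelSpace E]

theorem integral_inner_gradient_of_memTestClosure [IsFiniteMeasureOnCompacts μ]
    (hu : IsWeakSolution μ U w u l) (hw : ContinuousOn w U) {z : E → ℝ}
    (hz : MemTestClosure μ U w z) (hzm : AEStronglyMeasurable z (μ.restrict U)) :
    ∫ x, ⟪∇ u x, ∇ z x⟫ ∂weightedMeasure μ U w = l * ∫ x in U, ⟪u x, z x⟫ ∂μ := by
  obtain ⟨v, hv, hgrad_lim, hfun_lim⟩ := hz.exists_tendsto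
  have hgrad := tendsto_integral_inner (fun _ => hu.memLp_gradient)
    (fun n => (hv n).memLp_gradient hw ENNReal.ofNat_ne_top) hu.memLp_gradient
    (hz.memLp_gradient hw) (by simp) hgrad_lim
  have hfun := tendsto_integral_inner (fun _ => hu.memLp) (fun n => (hv n).memLp 2) hu.memLp
    (hz.memLp hzm) (by simp) hfun_lim
  simp only [hu.integral_inner_gradient _ (hv _)] at hgrad
  exact tendsto_nhds_unique hgrad (hfun.const_mul l)

theorem integral_norm_gradient_sq_eq [IsFiniteMeasureOnCompacts μ]
    (hu : IsWeakSolution μ U w u l) (hw : ContinuousOn w U) (hu0 : MemTestClosure μ U w u) :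
    ∫ x, ‖∇ u x‖ ^ 2 ∂weightedMeasure μ U w = l * ∫ x in U, u x ^ 2 ∂μ := by
  simpa [← sq] using hu.integral_inner_gradient_of_memTestClosure hw hu0 hu.memLp.1

end IsWeakSolution

end WeakSolution

section Picone

theorem tsupport_sq_div_subset {X : Type*} [TopologicalSpace X] {g u : X → ℝ} :
    tsupport (fun x => g x ^ 2 / u x) ⊆ tsupport g :=
  closure_mono fun x hx hgx => hx (by simp [hgx])

variable {E : Type*} [NormedAddCommGroup E] [InnerProductSpace ℝ E]

theorem inner_two_mul_smul_sub_sq_smul_le (a b : E) (t : ℝ) :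
    ⟪b, (2 * t) • a - t ^ 2 • b⟫ ≤ ‖a‖ ^ 2 := by
  have hexpand : ‖a - t • b‖ ^ 2 = ‖a‖ ^ 2 - ⟪b, (2 * t) • a - t ^ 2 • b⟫ := by
    rw [norm_sub_sq_real, norm_smul, inner_sub_right, real_inner_smul_right, real_inner_smul_right,
      real_inner_smul_right, real_inner_self_eq_norm_sq, real_inner_comm, mul_pow, Real.norm_eq_abs,
      sq_abs]
    ring
  linarith [sq_nonneg ‖a - t • b‖]

theorem hasGradientAt_sq_div [CompleteSpace E] {g u : E → ℝ} {g' u' x : E}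
    (hg : HasGradientAt g g' x) (hu : HasGradientAt u u' x) (hne : u x ≠ 0) :
    HasGradientAt (fun y => g y ^ 2 / u y) ((2 * (g x / u x)) • g' - (g x / u x) ^ 2 • u') x := by
  have hinv : HasGradientAt (fun y => (u y)⁻¹) (-(u x ^ 2)⁻¹ • u') x :=
    hasGradientAt_comp_of_hasDerivAt (hasDerivAt_inv hne) hu
  rw [hasGradientAt_iff_hasFDerivAt] at hg hinv ⊢
  refine (HasFDerivAt.mul (hg.pow 2) hinv).congr_fderiv ?_
  ext y
  simp only [neg_smul, map_neg, map_smul, smul_neg, Nat.add_one_sub_one, pow_one, nsmul_eq_mul,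
    Nat.cast_ofNat, add_apply, neg_apply, smul_apply, InnerProductSpace.toDual_apply_apply,
    smul_eq_mul, map_sub, sub_apply]
  field_simp
  ring

variable {U : Set E} {w u g : E → ℝ} {l : ℝ}

theorem exists_abs_div_le_of_isTestFun (hg : IsTestFun U g) (hu : ContinuousOn u U)
    (hne : ∀ x ∈ U, u x ≠ 0) : ∃ C, ∀ x, |g x / u x| ≤ C := by
  obtain ⟨C, hC⟩ := hg.hasCompactSupport.isCompact.exists_bound_of_continuousOn
    ((hg.contDiff.continuous.continuousOn.div hu hne).mono hg.tsupport_subset)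
  refine ⟨max C 0, fun x => ?_⟩
  by_cases hx : x ∈ tsupport g
  · exact (hC x hx).trans (le_max_left _ _)
  · simp [image_eq_zero_of_notMem_tsupport hx]

variable [FiniteDimensional ℝ E] [MeasurableSpace E] [BorelSpace E] {μ : Measure E}
  [μ.IsAddHaarMeasure]

theorem memTestClosure_sq_div (hU : IsOpen U) (hw : ContinuousOn w U) (hw0 : ∀ x ∈ U, 0 < w x)
    (hg : IsTestFun U g) (hu : DifferentiableOn ℝ u U) (hne : ∀ x ∈ U, u x ≠ 0)
    (hgrad : MemLp (∇ u) 2 (weightedMeasure μ U w)) :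
    MemTestClosure μ U w fun x => g x ^ 2 / u x := by
  obtain ⟨C, hC⟩ := exists_abs_div_le_of_isTestFun hg hu.continuousOn hne
  have hsupp : tsupport (fun x => g x ^ 2 / u x) ⊆ U :=
    tsupport_sq_div_subset.trans hg.tsupport_subset
  have hz (x : E) (hx : x ∈ U) := hasGradientAt_sq_div (hg.differentiable x).hasGradientAt
    (hu.hasGradientAt (hU.mem_nhds hx)) (hne x hx)
  refine memTestClosure_of_memLp_gradient hU hw hw0
    (differentiable_of_tsupport_subset hU
      (fun x hx => (hz x hx).differentiableAt.differentiableWithinAt) hsupp)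
    (hg.hasCompactSupport.of_isClosed_subset (isClosed_tsupport _) tsupport_sq_div_subset)
    hsupp ((((hg.memLp_gradient hw ENNReal.ofNat_ne_top).norm.const_mul (2 * C)).add
      (hgrad.norm.const_mul (C ^ 2))).mono' (stronglyMeasurable_gradient _).aestronglyMeasurable ?_)
  filter_upwards [ae_mem_weightedMeasure hU.measurableSet] with x hx
  rw [(hz x hx).gradient, Pi.add_apply]
  refine norm_sub_le_of_le ?_ ?_
  · rw [norm_smul, Real.norm_eq_abs, abs_mul, abs_two]
    gcongr
    exact hC x
  · rw [norm_smul, norm_pow, Real.norm_eq_abs]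
    gcongr
    exact hC x

theorem IsWeakSolution.mul_integral_sq_le (h : IsWeakSolution μ U w u l) (hU : IsOpen U)
    (hw : ContinuousOn w U) (hw0 : ∀ x ∈ U, 0 < w x) (hu : DifferentiableOn ℝ u U)
    (hne : ∀ x ∈ U, u x ≠ 0) (hg : IsTestFun U g) :
    l * ∫ x in U, g x ^ 2 ∂μ ≤ ∫ x, ‖∇ g x‖ ^ 2 ∂weightedMeasure μ U w := by
  have hz : MemTestClosure μ U w fun x => g x ^ 2 / u x :=
    memTestClosure_sq_div hU hw hw0 hg hu hne h.memLp_gradient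
  have hzm : AEStronglyMeasurable (fun x => g x ^ 2 / u x) (μ.restrict U) :=
    ((hg.contDiff.continuous.continuousOn.pow 2).div hu.continuousOn hne).aestronglyMeasurable
      hU.measurableSet
  calc l * ∫ x in U, g x ^ 2 ∂μ = l * ∫ x in U, ⟪u x, g x ^ 2 / u x⟫ ∂μ := by
        congr 1
        refine setIntegral_congr_fun hU.measurableSet fun x hx => ?_
        simp [div_mul_cancel₀ _ (hne x hx)]
    _ = ∫ x, ⟪∇ u x, ∇ (fun x => g x ^ 2 / u x) x⟫ ∂weightedMeasure μ U w :=
        (h.integral_inner_gradient_of_memTestClosure hw hz hzm).symm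
    _ ≤ ∫ x, ‖∇ g x‖ ^ 2 ∂weightedMeasure μ U w := by
        refine integral_mono_ae (integrable_inner_of_memLp h.memLp_gradient (hz.memLp_gradient hw))
          (hg.memLp_gradient hw ENNReal.ofNat_ne_top).norm.integrable_sq ?_
        filter_upwards [ae_mem_weightedMeasure hU.measurableSet] with x hx
        rw [(hasGradientAt_sq_div (hg.differentiable x).hasGradientAt
          (hu.hasGradientAt (hU.mem_nhds hx)) (hne x hx)).gradient]
        exact inner_two_mul_smul_sub_sq_smul_le _ _ _

end Picone

theorem setIntegral_sq_pos {X : Type*} [TopologicalSpace X] [MeasurableSpace X] {μ : Measure X}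
    [μ.IsOpenPosMeasure] {U : Set X} {u : X → ℝ} (hU : IsOpen U) (hUne : U.Nonempty)
    (hu : MemLp u 2 (μ.restrict U)) (hne : ∀ x ∈ U, u x ≠ 0) :
    0 < ∫ x in U, u x ^ 2 ∂μ := by
  rw [setIntegral_pos_iff_support_of_nonneg_ae (.of_forall fun x => sq_nonneg (u x))
    hu.integrable_sq]
  refine (hU.measure_pos μ hUne).trans_le (measure_mono fun x hx => ⟨?_, hx⟩)
  exact pow_ne_zero 2 (hne x hx)

section Rayleigh

variable {E : Type*} [NormedAddCommGroup E] [InnerProductSpace ℝ E] [FiniteDimensional ℝ E]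
  [MeasurableSpace E] {μ : Measure E} {U : Set E} {w u : E → ℝ} {l : ℝ}

/-- The upper bounds of Rayleigh quotients of single test functions on `U`; their infimum is the
first Dirichlet eigenvalue of `-div(w∇·)` on `U`. -/
def rayleighBounds (μ : Measure E) (U : Set E) (w : E → ℝ) : Set ℝ :=
  {r | ∃ v, IsTestFun U v ∧ 0 < ∫ x in U, v x ^ 2 ∂μ ∧
    ∫ x, ‖∇ v x‖ ^ 2 ∂weightedMeasure μ U w ≤ r * ∫ x in U, v x ^ 2 ∂μ}

variable [BorelSpace E]

theorem MemTestClosure.mem_rayleighBounds [IsFiniteMeasureOnCompacts μ]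
    (hu : MemTestClosure μ U w u) (hum : AEStronglyMeasurable u (μ.restrict U))
    (hw : ContinuousOn w U) {r : ℝ} (hpos : 0 < ∫ x in U, u x ^ 2 ∂μ)
    (hr : ∫ x, ‖∇ u x‖ ^ 2 ∂weightedMeasure μ U w < r * ∫ x in U, u x ^ 2 ∂μ) :
    r ∈ rayleighBounds μ U w := by
  obtain ⟨v, hv, hgrad_lim, hfun_lim⟩ := hu.exists_tendsto
  have hgradLp (n : ℕ) := (hv n).memLp_gradient (μ := μ) hw (p := 2) ENNReal.ofNat_ne_top
  have henergy := tendsto_integral_inner hgradLp hgradLp (hu.memLp_gradient hw)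
    (hu.memLp_gradient hw) hgrad_lim hgrad_lim
  have hmass := tendsto_integral_inner (fun n => (hv n).memLp 2) (fun n => (hv n).memLp 2)
    (hu.memLp hum) (hu.memLp hum) hfun_lim hfun_lim
  simp only [real_inner_self_eq_norm_sq, Real.norm_eq_abs, sq_abs] at henergy hmass
  obtain ⟨n, hn, hn_pos⟩ := ((henergy.eventually_lt (hmass.const_mul r) hr).and
    (hmass.eventually_const_lt hpos)).exists
  exact ⟨v n, hv n, hn_pos, hn.le⟩

theorem IsWeakSolution.isGLB_rayleighBounds [μ.IsAddHaarMeasure] (h : IsWeakSolution μ U w u l)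
    (hU : IsOpen U) (hUne : U.Nonempty) (hw : ContinuousOn w U) (hw0 : ∀ x ∈ U, 0 < w x)
    (hu : DifferentiableOn ℝ u U) (hne : ∀ x ∈ U, u x ≠ 0) (hu0 : MemTestClosure μ U w u) :
    IsGLB (rayleighBounds μ U w) l := by
  refine ⟨?_, fun b hb => le_of_forall_gt_imp_ge_of_dense fun r hr => hb ?_⟩
  · rintro r ⟨g, hg, hpos, hle⟩
    exact le_of_mul_le_mul_right ((h.mul_integral_sq_le hU hw hw0 hu hne hg).trans hle) hpos
  · have hpos := setIntegral_sq_pos (μ := μ) hU hUne h.memLp hne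
    refine hu0.mem_rayleighBounds h.memLp.1 hw hpos ?_
    rw [h.integral_norm_gradient_sq_eq hw hu0]
    exact mul_lt_mul_of_pos_right hr hpos

end Rayleigh

section NodalDomain

theorem notMem_of_mem_frontier_connectedComponentIn {X : Type*} [TopologicalSpace X]
    [LocallyConnectedSpace X] {S : Set X} (hS : IsOpen S) {x y : X}
    (hx : x ∈ frontier (connectedComponentIn S y)) : x ∉ S := by
  intro hxS
  rw [hS.connectedComponentIn.frontier_eq] at hx
  obtain ⟨z, hzx, hzy⟩ := mem_closure_iff.1 hx.1 _ hS.connectedComponentIn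
    (mem_connectedComponentIn hxS)
  refine hx.2 ?_
  rw [connectedComponentIn_eq hzy, ← connectedComponentIn_eq hzx]
  exact mem_connectedComponentIn hxS

/-- The nodal domain of `u` in `U` that contains `y`; empty if `y` is not in `{x ∈ U | u x ≠ 0}`. -/
def nodalDomain {X : Type*} [TopologicalSpace X] (U : Set X) (u : X → ℝ) (y : X) : Set X :=
  connectedComponentIn {x ∈ U | u x ≠ 0} y

variable {X : Type*} [TopologicalSpace X] {U : Set X} {u : X → ℝ} {x y : X}

theorem nodalDomain_subset_setOf : nodalDomain U u y ⊆ {x ∈ U | u x ≠ 0} :=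
  connectedComponentIn_subset _ _

theorem nodalDomain_subset : nodalDomain U u y ⊆ U :=
  nodalDomain_subset_setOf.trans (sep_subset _ _)

theorem ne_zero_of_mem_nodalDomain (hx : x ∈ nodalDomain U u y) : u x ≠ 0 :=
  (nodalDomain_subset_setOf hx).2

theorem mem_nodalDomain_self (hy : y ∈ U) (huy : u y ≠ 0) : y ∈ nodalDomain U u y :=
  mem_connectedComponentIn ⟨hy, huy⟩

theorem isOpen_setOf_ne_zero (hU : IsOpen U) (hu : ContinuousOn u U) : IsOpen {x ∈ U | u x ≠ 0} :=
  hu.isOpen_inter_preimage hU isOpen_ne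

variable [LocallyConnectedSpace X]

theorem isOpen_nodalDomain (hU : IsOpen U) (hu : ContinuousOn u U) : IsOpen (nodalDomain U u y) :=
  (isOpen_setOf_ne_zero hU hu).connectedComponentIn

theorem eq_zero_of_mem_frontier_nodalDomain (hU : IsOpen U) (hu : ContinuousOn u U)
    (hu0 : ∀ x ∈ frontier U, u x = 0) (hx : x ∈ frontier (nodalDomain U u y)) : u x = 0 := by
  by_contra hne
  have hxU : x ∉ U := fun hxU =>
    notMem_of_mem_frontier_connectedComponentIn (isOpen_setOf_ne_zero hU hu) hx ⟨hxU, hne⟩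
  refine hne (hu0 x (hU.frontier_eq ▸ ⟨?_, hxU⟩))
  exact closure_mono nodalDomain_subset (frontier_subset_closure hx)

end NodalDomain

section NodalDomainEnergy

variable {E : Type*} [NormedAddCommGroup E] [InnerProductSpace ℝ E] [FiniteDimensional ℝ E]
  [MeasurableSpace E] [BorelSpace E] {μ : Measure E} [μ.IsAddHaarMeasure] {U : Set E}
  {w u : E → ℝ} {l : ℝ} {y : E}

theorem memTestClosure_nodalDomain (hU : IsOpen U) (hw : ContinuousOn w U)
    (hw0 : ∀ x ∈ U, 0 < w x) (huc : ContinuousOn u (closure U)) (hu0 : ∀ x ∈ frontier U, u x = 0)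
    (hu : DifferentiableOn ℝ u U) (hu2 : MemLp u 2 (μ.restrict U))
    (hgrad : MemLp (∇ u) 2 (weightedMeasure μ U w))
    (hbd : Bornology.IsBounded (nodalDomain U u y)) :
    MemTestClosure μ (nodalDomain U u y) w u := by
  have hD : IsOpen (nodalDomain U u y) := isOpen_nodalDomain hU hu.continuousOn
  have hDU : nodalDomain U u y ⊆ U := nodalDomain_subset
  refine memTestClosure_of_eq_zero_on_frontier hD hbd.isCompact_closure (hw.mono hDU)
    (fun x hx => hw0 x (hDU hx)) (huc.mono (closure_mono hDU))
    (fun x => eq_zero_of_mem_frontier_nodalDomain hU hu.continuousOn hu0) (hu.mono hDU)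
    (fun x => ne_zero_of_mem_nodalDomain) (hu2.mono_measure (Measure.restrict_mono hDU le_rfl)) ?_
  rw [← weightedMeasure_restrict hD.measurableSet hDU]
  exact hgrad.restrict _

theorem IsWeakSolution.isGLB_rayleighBounds_nodalDomain (h : IsWeakSolution μ U w u l)
    (hU : IsOpen U) (hw : ContinuousOn w U) (hw0 : ∀ x ∈ U, 0 < w x)
    (hu : DifferentiableOn ℝ u U) (hy : y ∈ U) (huy : u y ≠ 0)
    (hu0 : MemTestClosure μ (nodalDomain U u y) w u) :
    IsGLB (rayleighBounds μ (nodalDomain U u y) w) l := by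
  have hD : IsOpen (nodalDomain U u y) := isOpen_nodalDomain hU hu.continuousOn
  have hDU : nodalDomain U u y ⊆ U := nodalDomain_subset
  exact (h.mono hD.measurableSet hDU).isGLB_rayleighBounds hD ⟨y, mem_nodalDomain_self hy huy⟩
    (hw.mono hDU) (fun x hx => hw0 x (hDU hx)) (hu.mono hDU) (fun x => ne_zero_of_mem_nodalDomain)
    hu0

end NodalDomainEnergy

section Euclidean

variable {N : ℕ} {U : Set (EuclideanSpace ℝ (Fin N))} {w u : EuclideanSpace ℝ (Fin N) → ℝ} {l : ℝ}

theorem dirEigen_one_eq_sInf_rayleighBounds (hU : MeasurableSet U) (hw : ContinuousOn w U)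
    (hw0 : ∀ x ∈ U, 0 ≤ w x) : dirEigen U w 1 = sInf (rayleighBounds volume U w) := by
  rw [dirEigen, rayleighBounds]
  congr! 3 with r
  simp only [integral_weightedMeasure hU hw hw0]
  constructor
  · rintro ⟨g, hg, hle⟩
    obtain ⟨hsmooth, hcomp, hsupp⟩ := hg 0
    exact ⟨g 0, ⟨hsmooth, hcomp, hsupp⟩, by simpa using hle 1 one_ne_zero⟩
  · rintro ⟨v, hv, hpos, hle⟩
    refine ⟨fun _ => v, fun _ => ⟨hv.contDiff, hv.hasCompactSupport, hv.tsupport_subset⟩,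
      fun c hc => ?_⟩
    have hc0 : c 0 ≠ 0 := fun h => hc (funext fun j => by rwa [Subsingleton.elim j 0])
    have hgrad (x : EuclideanSpace ℝ (Fin N)) : ∇ (fun y => c 0 * v y) x = c 0 • ∇ v x :=
      (hasGradientAt_comp_of_hasDerivAt (by simpa using (hasDerivAt_id (v x)).const_mul (c 0))
        (hv.differentiable x).hasGradientAt).gradient
    simp only [Fin.sum_univ_one, hgrad, norm_smul, mul_pow, mul_assoc, integral_const_mul,
      Real.norm_eq_abs, sq_abs, mul_left_comm r]
    exact ⟨by positivity, by gcongr⟩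

theorem H01Mem.memLp (h : H01Mem U w u) (hU : MeasurableSet U) : MemLp u 2 (volume.restrict U) :=
  (memLp_two_iff_integrable_sq ((h.1.mono subset_closure).aestronglyMeasurable hU)).2 h.2.2.2.1

theorem H01Mem.memLp_gradient (h : H01Mem U w u) (hU : MeasurableSet U) (hw : ContinuousOn w U)
    (hw0 : ∀ x ∈ U, 0 ≤ w x) : MemLp (∇ u) 2 (weightedMeasure volume U w) :=
  (memLp_two_iff_integrable_sq_norm (stronglyMeasurable_gradient u).aestronglyMeasurable).2 <|
    (integrable_weightedMeasure_iff hU hw hw0).2 h.2.2.2.2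

theorem IsWeakEigenfun.isWeakSolution (h : IsWeakEigenfun U w u l) (hU : MeasurableSet U)
    (hw : ContinuousOn w U) (hw0 : ∀ x ∈ U, 0 ≤ w x) : IsWeakSolution volume U w u l where
  memLp := h.1.memLp hU
  memLp_gradient := h.1.memLp_gradient hU hw hw0
  integral_inner_gradient v hv := by
    rw [integral_weightedMeasure hU hw hw0,
      h.2 v hv.contDiff hv.hasCompactSupport hv.tsupport_subset]
    simp [mul_comm]

end Euclidean

theorem stmt_11_general {N : ℕ} {Ω : Set (EuclideanSpace ℝ (Fin N))}
    {w Φ : EuclideanSpace ℝ (Fin N) → ℝ} {l : ℝ} {y : EuclideanSpace ℝ (Fin N)}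
    (hΩ : IsOpen Ω) (hw : ContinuousOn w Ω) (hw0 : ∀ x ∈ Ω, 0 < w x)
    (heig : IsWeakEigenfun Ω w Φ l) (hy : y ∈ Ω) (hΦy : Φ y ≠ 0)
    (hbd : Bornology.IsBounded (nodalDomain Ω Φ y)) :
    (∃ v : ℕ → EuclideanSpace ℝ (Fin N) → ℝ,
      (∀ n, ContDiff ℝ (⊤ : ℕ∞) (v n) ∧ HasCompactSupport (v n) ∧
        tsupport (v n) ⊆ nodalDomain Ω Φ y) ∧
      Tendsto (fun n => (∫ x in nodalDomain Ω Φ y, ‖∇ (v n) x - ∇ Φ x‖ ^ 2 * w x) +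
        ∫ x in nodalDomain Ω Φ y, (v n x - Φ x) ^ 2) atTop (𝓝 0)) ∧
    l = dirEigen (nodalDomain Ω Φ y) w 1 := by
  obtain ⟨hΦc, hΦ0, hΦd, -⟩ := heig.1
  have hD : MeasurableSet (nodalDomain Ω Φ y) :=
    (isOpen_nodalDomain hΩ hΦd.continuousOn).measurableSet
  have hwD : ContinuousOn w (nodalDomain Ω Φ y) := hw.mono nodalDomain_subset
  have hwD0 (x) (hx : x ∈ nodalDomain Ω Φ y) : 0 ≤ w x := (hw0 x (nodalDomain_subset hx)).le
  have hsol : IsWeakSolution volume Ω w Φ l :=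
    heig.isWeakSolution hΩ.measurableSet hw fun x hx => (hw0 x hx).le
  have hclosure : MemTestClosure volume (nodalDomain Ω Φ y) w Φ :=
    memTestClosure_nodalDomain hΩ hw hw0 hΦc hΦ0 hΦd hsol.memLp hsol.memLp_gradient hbd
  have hglb : IsGLB (rayleighBounds volume (nodalDomain Ω Φ y) w) l :=
    hsol.isGLB_rayleighBounds_nodalDomain hΩ hw hw0 hΦd hy hΦy hclosure
  constructor
  · obtain ⟨v, hv, hlim⟩ :=
      hclosure.exists_tendsto_integral (hsol.mono hD nodalDomain_subset).memLp.1
    simp only [integral_weightedMeasure hD hwD hwD0] at hlim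
    exact ⟨v, fun n => ⟨(hv n).contDiff, (hv n).hasCompactSupport, (hv n).tsupport_subset⟩, hlim⟩
  · rw [dirEigen_one_eq_sInf_rayleighBounds hD hwD hwD0, hglb.csInf_eq hglb.nonempty]

/-- **Nodal domains and the first eigenvalue** (Lemma 3.4): let `Φ` be a weak
Dirichlet eigenfunction of `-div(w∇·)` on `Ω` with eigenvalue `l`, and let
`Ωⱼ = connectedComponentIn {Φ ≠ 0} y` be a nodal domain of `Φ`.  Then the
restriction of `Φ` to `Ωⱼ` (extended by zero) belongs to `H₀¹(Ωⱼ;w)` — i.e. it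
is approximated in the weighted energy norm and in `L²` by test functions on
`Ωⱼ` — and `l = λ₁(Ωⱼ)`, the first Dirichlet eigenvalue of `-div(w∇·)` on `Ωⱼ`. -/
theorem stmt_11 (N : ℕ) (Ω : Set (EuclideanSpace ℝ (Fin N)))
    (hΩopen : IsOpen Ω) (hΩbd : Bornology.IsBounded Ω) (hΩconn : IsConnected Ω)
    (w : EuclideanSpace ℝ (Fin N) → ℝ)
    (hw_cont : ContinuousOn w (closure Ω)) (hw_smooth : ContDiffOn ℝ (⊤ : ℕ∞) w Ω)
    (hw_pos : ∀ x ∈ Ω, 0 < w x)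
    (Φ : EuclideanSpace ℝ (Fin N) → ℝ) (l : ℝ)
    (heig : IsWeakEigenfun Ω w Φ l)
    (y : EuclideanSpace ℝ (Fin N)) (hy : y ∈ Ω) (hΦy : Φ y ≠ 0) :
    (∃ v : ℕ → EuclideanSpace ℝ (Fin N) → ℝ,
      (∀ n, ContDiff ℝ (⊤ : ℕ∞) (v n) ∧ HasCompactSupport (v n) ∧
        tsupport (v n) ⊆ connectedComponentIn {x ∈ Ω | Φ x ≠ 0} y) ∧
      Filter.Tendsto (fun n =>
          (∫ x in connectedComponentIn {x ∈ Ω | Φ x ≠ 0} y,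
            ‖gradient (v n) x - gradient Φ x‖ ^ 2 * w x) +
          ∫ x in connectedComponentIn {x ∈ Ω | Φ x ≠ 0} y, (v n x - Φ x) ^ 2)
        Filter.atTop (nhds 0)) ∧
    l = dirEigen (connectedComponentIn {x ∈ Ω | Φ x ≠ 0} y) w 1 :=
  stmt_11_general hΩopen (hw_cont.mono subset_closure) hw_pos heig hy hΦy
    (hΩbd.subset nodalDomain_subset)
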